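/- arXiv:2405.08687 — 4 statements merged into one kernel-verified Lean document; each statement's English description precedes it below -/
import Mathlib

section
/- Let d, m be positive integers, β₁⁰, β₂⁰ ∈ ℝ^d, and let M₁₁, M₁₂, M₂₁, M₂₂ be m×d real matrices. Let λ₁₁, λ₂₂, λ₁⁰, λ₂⁰ be real numbers with λ₁₁ + λ₂⁰ − λ₂₂ ≠ 0 and λ₂₂ + λ₁⁰ − λ₁₁ ≠ 0. Define β₁(γ) ≔ (λ₁₁ β₁⁰ + (λ₂⁰ − λ₂₂) β₂⁰)/(λ₁₁ + λ₂⁰ − λ₂₂) and β₂(γ) ≔ (λ₂₂ β₂⁰ + (λ₁⁰ − λ₁₁) β₁⁰)/(λ₂₂ + λ₁⁰ − λ₁₁), and define m(β₁, β₂) ≔ λ₁₁ M₁₁ (β₁⁰ − β₁) + (λ₂⁰ − λ₂₂) M₂₁ (β₂⁰ − β₁) + (λ₁⁰ − λ₁₁) M₁₂ (β₁⁰ − β₂) + λ₂₂ M₂₂ (β₂⁰ − β₂). Then m(β₁(γ), β₂(γ)) = (λ₁₁(λ₂⁰ − λ₂₂)/(λ₁₁ + λ₂⁰ − λ₂₂))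 (M₂₁ − M₁₁)(β₂⁰ − β₁⁰) + (λ₂₂(λ₁⁰ − λ₁₁)/(λ₂₂ + λ₁⁰ − λ₁₁)) (M₂₂ − M₁₂)(β₂⁰ − β₁⁰). -/
open Matrix

/-!
Each pseudo-true value is the weighted mean of the two true coefficients, the weights being the
fractions of the two true groups among the units assigned to that group. The residuals `x - c` and
`y - c` at a weighted mean `c` of `x` and `y` are opposite multiples of `y - x`, in proportion to
the other point's weight. So the two terms of the moment that come from one assigned group carry
the same coefficient with opposite signs, and only the difference of their linear maps survives.
-/

section WeightedMean

variable {K V W : Type*} [Field K] [AddCommGroup V] [Module K V] [AddCommGroup W] [Module K W]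

/-- The mean of two vectors `x` and `y` with weights `a` and `b`: the pseudo-true coefficient of an
assigned group that mixes the two true groups in these proportions. The weights need be neither
nonnegative nor normalized; the value is `0` when `a + b = 0`. -/
def weightedMean (a b : K) (x y : V) : V := (a + b)⁻¹ • (a • x + b • y)

theorem weightedMean_comm (a b : K) (x y : V) : weightedMean a b x y = weightedMean b a y x := by
  rw [weightedMean, weightedMean, add_comm a, add_comm (a • x)]

theorem sub_weightedMean_left {a b : K} (h : a + b ≠ 0) (x y : V) :
    x - weightedMean a b x y = (b / (a + b)) • (x - y) := by
  rw [weightedMean, sub_eq_iff_eq_add]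
  match_scalars <;> field_simp <;> ring

theorem sub_weightedMean_right {a b : K} (h : a + b ≠ 0) (x y : V) :
    y - weightedMean a b x y = (a / (a + b)) • (y - x) := by
  rw [weightedMean_comm, sub_weightedMean_left (add_comm a b ▸ h), add_comm b]

theorem smul_map_sub_weightedMean_add {a b : K} (h : a + b ≠ 0) (f g : V →ₗ[K] W) (x y : V) :
    a • f (x - weightedMean a b x y) + b • g (y - weightedMean a b x y) =
      (a * b / (a + b)) • (g - f) (y - x) :=
  calc
    _ = (a * b / (a + b)) • f (x - y) + (a * b / (a + b)) • g (y - x) := by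
      rw [sub_weightedMean_left h, sub_weightedMean_right h, map_smul, map_smul, smul_smul,
        smul_smul, mul_div_assoc', mul_div_assoc', mul_comm b a]
    _ = (a * b / (a + b)) • (g - f) (y - x) := by
      rw [← neg_sub y x, map_neg, ← smul_add, neg_add_eq_sub, LinearMap.sub_apply]

theorem statement3_general (β10 β20 : V) (M11 M12 M21 M22 : V →ₗ[K] W) (l11 l22 l10 l20 : K)
    (h1 : l11 + l20 - l22 ≠ 0) (h2 : l22 + l10 - l11 ≠ 0) :
    let β1γ : V := (l11 + l20 - l22)⁻¹ • (l11 • β10 + (l20 - l22) • β20)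
    let β2γ : V := (l22 + l10 - l11)⁻¹ • (l22 • β20 + (l10 - l11) • β10)
    l11 • M11 (β10 - β1γ) + (l20 - l22) • M21 (β20 - β1γ)
      + (l10 - l11) • M12 (β10 - β2γ) + l22 • M22 (β20 - β2γ)
      = (l11 * (l20 - l22) / (l11 + l20 - l22)) • (M21 - M11) (β20 - β10)
        + (l22 * (l10 - l11) / (l22 + l10 - l11)) • (M22 - M12) (β20 - β10) := by
  simp only [add_sub_assoc l11, add_sub_assoc l22] at h1 h2 ⊢
  have group_one := smul_map_sub_weightedMean_add h1 M11 M21 β10 β20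
  have group_two := smul_map_sub_weightedMean_add h2 M22 M12 β20 β10
  have swap_groups : (M12 - M22) (β10 - β20) = (M22 - M12) (β20 - β10) := by
    rw [← neg_sub M22 M12, ← neg_sub β20 β10, LinearMap.neg_apply, map_neg, neg_neg]
  rw [swap_groups] at group_two
  rw [add_assoc, add_comm ((l10 - l11) • _)]
  exact congrArg₂ (· + ·) group_one group_two

end WeightedMean

/-- **Closed form of the limit GMM moment (proof of Theorem 2).** Evaluating the limit moment
`m(β₁, β₂)` at the pseudo-true values `β₁(γ), β₂(γ)` gives the displayed combination of
`(M₂₁ − M₁₁)(β₂⁰ − β₁⁰)` and `(M₂₂ − M₁₂)(β₂⁰ − β₁⁰)`. -/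
theorem statement3 (d m : ℕ) (hd : 0 < d) (hm : 0 < m)
    (β10 β20 : Fin d → ℝ)
    (M11 M12 M21 M22 : Matrix (Fin m) (Fin d) ℝ)
    (l11 l22 l10 l20 : ℝ)
    (h1 : l11 + l20 - l22 ≠ 0) (h2 : l22 + l10 - l11 ≠ 0) :
    let β1γ : Fin d → ℝ := (l11 + l20 - l22)⁻¹ • (l11 • β10 + (l20 - l22) • β20)
    let β2γ : Fin d → ℝ := (l22 + l10 - l11)⁻¹ • (l22 • β20 + (l10 - l11) • β10)
    l11 • M11.mulVec (β10 - β1γ) + (l20 - l22) • M21.mulVec (β20 - β1γ)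
      + (l10 - l11) • M12.mulVec (β10 - β2γ) + l22 • M22.mulVec (β20 - β2γ)
      = (l11 * (l20 - l22) / (l11 + l20 - l22)) • (M21 - M11).mulVec (β20 - β10)
        + (l22 * (l10 - l11) / (l22 + l10 - l11)) • (M22 - M12).mulVec (β20 - β10) := by
  simpa only [mulVecLin_apply, LinearMap.sub_apply, sub_mulVec] using
    statement3_general β10 β20 M11.mulVecLin M12.mulVecLin M21.mulVecLin M22.mulVecLin
      l11 l22 l10 l20 h1 h2
end

section
/- Let d, m be positive integers, β₁⁰, β₂⁰ ∈ ℝ^d, M₁, M₂ m×d real matrices, and W₁, W₂ m×m real matrices. Let λ₁₁, λ₂₂, λ₁⁰, λ₂⁰ be real numbers with λ₁₁ + λ₂⁰ − λ₂₂ ≠ 0 and λ₂₂ + λ₁⁰ − λ₁₁ ≠ 0. Define β₁(γ) ≔ (λ₁₁ β₁⁰ + (λ₂⁰ − λ₂₂) β₂⁰)/(λ₁₁ + λ₂⁰ − λ₂₂) and β₂(γ) ≔ (λ₂₂ β₂⁰ + (λ₁⁰ − λ₁₁) β₁⁰)/(λ₂₂ + λ₁⁰ − λ₁₁), and define m₁(β₁)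 ≔ λ₁₁ M₁ (β₁⁰ − β₁) + (λ₂⁰ − λ₂₂) M₂ (β₂⁰ − β₁) and m₂(β₂) ≔ (λ₁⁰ − λ₁₁) M₁ (β₁⁰ − β₂) + λ₂₂ M₂ (β₂⁰ − β₂). Then m₁(β₁(γ)) = (λ₁₁(λ₂⁰ − λ₂₂)/(λ₁₁ + λ₂⁰ − λ₂₂)) (M₂ − M₁)(β₂⁰ − β₁⁰) and m₂(β₂(γ)) = (λ₂₂(λ₁⁰ − λ₁₁)/(λ₂₂ + λ₁⁰ − λ₁₁)) (M₂ − M₁)(β₂⁰ − β₁⁰), and consequently m₁(β₁(γ))ᵀ W₁ m₁(β₁(γ)) + m₂(β₂(γ))ᵀ W₂ m₂(β₂(γ)) = (λ₁₁(λ₂⁰ − λ₂₂)/(λ₁₁ + λ₂⁰ − λ₂₂))² (β₂⁰ − β₁⁰)ᵀ (M₂ − M₁)ᵀ W₁ (M₂ − M₁)(β₂⁰ − β₁⁰) + (λ₂₂(λ₁⁰ − λ₁₁)/(λ₂₂ + λ₁⁰ − λ₁₁))² (β₂⁰ − β₁⁰)ᵀ (M₂ − M₁)ᵀ W₂ (M₂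 − M₁)(β₂⁰ − β₁⁰). In particular, if (M₂ − M₁)(β₂⁰ − β₁⁰) = 0, this sum is zero. -/
open Matrix

/-!
The pseudo-true value `z` balances the weights, `a • (x - z) + b • (y - z) = 0`. Hence the part of
the moment that the two cross-moment maps `f`, `g` have in common cancels, leaving
`b • (g - f) (y - z)`, and `y - z` is the fraction `a / (a + b)` of the displacement `y - x`.
-/

section PseudoTrueValue

variable {K E F N : Type*} [Field K] [AddCommGroup E] [Module K E] [AddCommGroup F] [Module K F]
  [AddCommMonoid N] [Module K N]

/-- The pseudo-true value of an assigned group in which the units of the two true groups, with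
coefficients `x` and `y`, have weights `a` and `b`. If `a + b = 0` it is the junk value `0`. -/
def pseudoTrueValue (a b : K) (x y : E) : E :=
  (a + b)⁻¹ • (a • x + b • y)

/-- The limit at `z` of the sample moment of an assigned group in which the units of the two
true groups have weights `a` and `b`, limit cross-moments `f` and `g` (matrices in the paper, linear
maps here) and coefficients `x` and `y`. -/
def limitMoment (a b : K) (f g : E →ₗ[K] F) (x y z : E) : F :=
  a • f (x - z) + b • g (y - z)

theorem pseudoTrueValue_comm (a b : K) (x y : E) :
    pseudoTrueValue a b x y = pseudoTrueValue b a y x := by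
  simp only [pseudoTrueValue, add_comm]

theorem right_sub_pseudoTrueValue {a b : K} (h : a + b ≠ 0) (x y : E) :
    y - pseudoTrueValue a b x y = (a / (a + b)) • (y - x) := by
  rw [pseudoTrueValue]
  match_scalars <;> field_simp
  ring

theorem left_sub_pseudoTrueValue {a b : K} (h : a + b ≠ 0) (x y : E) :
    x - pseudoTrueValue a b x y = (b / (a + b)) • (x - y) := by
  rw [pseudoTrueValue_comm, right_sub_pseudoTrueValue (by rwa [add_comm]), add_comm]

theorem smul_sub_pseudoTrueValue_add_smul_sub {a b : K} (h : a + b ≠ 0) (x y : E) :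
    a • (x - pseudoTrueValue a b x y) + b • (y - pseudoTrueValue a b x y) = 0 := by
  rw [left_sub_pseudoTrueValue h, right_sub_pseudoTrueValue h]
  module

theorem limitMoment_eq_of_balanced {a b : K} {x y z : E}
    (hz : a • (x - z) + b • (y - z) = 0) (f g : E →ₗ[K] F) :
    limitMoment a b f g x y z = b • (g - f) (y - z) := by
  have hf : a • f (x - z) = -(b • f (y - z)) := by
    rw [← map_smul, eq_neg_of_add_eq_zero_left hz, map_neg, map_smul]
  rw [limitMoment, hf, LinearMap.sub_apply, smul_sub, neg_add_eq_sub]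

theorem limitMoment_pseudoTrueValue {a b : K} (h : a + b ≠ 0) (f g : E →ₗ[K] F) (x y : E) :
    limitMoment a b f g x y (pseudoTrueValue a b x y) =
      (a * b / (a + b)) • (g - f) (y - x) := by
  rw [limitMoment_eq_of_balanced (smul_sub_pseudoTrueValue_add_smul_sub h x y),
    right_sub_pseudoTrueValue h, map_smul, smul_smul, mul_div_left_comm, mul_div_assoc]

theorem quadraticMap_limitMoment_pseudoTrueValue {a b : K} (h : a + b ≠ 0)
    (Q : QuadraticMap K F N) (f g : E →ₗ[K] F) (x y : E) :
    Q (limitMoment a b f g x y (pseudoTrueValue a b x y)) =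
      (a * b / (a + b)) ^ 2 • Q ((g - f) (y - x)) := by
  rw [limitMoment_pseudoTrueValue h, QuadraticMap.map_smul, sq]

theorem statement5_general {a₁ b₁ a₂ b₂ : K} (h₁ : a₁ + b₁ ≠ 0) (h₂ : a₂ + b₂ ≠ 0)
    (Q₁ Q₂ : QuadraticMap K F N) (f g : E →ₗ[K] F) (x y : E) :
    let m₁ := limitMoment a₁ b₁ f g x y (pseudoTrueValue a₁ b₁ x y)
    let m₂ := limitMoment a₂ b₂ f g x y (pseudoTrueValue a₂ b₂ x y)
    let v := (g - f) (y - x)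
    m₁ = (a₁ * b₁ / (a₁ + b₁)) • v ∧ m₂ = (a₂ * b₂ / (a₂ + b₂)) • v ∧
      Q₁ m₁ + Q₂ m₂ = (a₁ * b₁ / (a₁ + b₁)) ^ 2 • Q₁ v + (a₂ * b₂ / (a₂ + b₂)) ^ 2 • Q₂ v ∧
      (v = 0 → Q₁ m₁ + Q₂ m₂ = 0) := by
  intro m₁ m₂ v
  have objective_eq : Q₁ m₁ + Q₂ m₂ =
      (a₁ * b₁ / (a₁ + b₁)) ^ 2 • Q₁ v + (a₂ * b₂ / (a₂ + b₂)) ^ 2 • Q₂ v :=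
    congrArg₂ (· + ·) (quadraticMap_limitMoment_pseudoTrueValue h₁ Q₁ f g x y)
      (quadraticMap_limitMoment_pseudoTrueValue h₂ Q₂ f g x y)
  refine ⟨limitMoment_pseudoTrueValue h₁ f g x y, limitMoment_pseudoTrueValue h₂ f g x y,
    objective_eq, fun hv => ?_⟩
  rw [objective_eq, hv, QuadraticMap.map_zero, QuadraticMap.map_zero, smul_zero, smul_zero,
    add_zero]

end PseudoTrueValue

theorem toQuadraticForm'_eq_dotProduct_mulVec {R n : Type*} [CommRing R] [Fintype n] [DecidableEq n]
    (W : Matrix n n R) (v : n → R) : W.toQuadraticForm' v = v ⬝ᵥ W *ᵥ v :=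
  Matrix.toLinearMap₂'_apply' W v v

/-- **Algebraic core of Theorem 3 (group-specific GMM objective).** The limit group-wise
moments `m₁, m₂` evaluated at the pseudo-true values equal the displayed multiples of
`(M₂ − M₁)(β₂⁰ − β₁⁰)`, the weighted objective equals the displayed sum of quadratic forms,
and in particular the sum vanishes whenever `(M₂ − M₁)(β₂⁰ − β₁⁰) = 0`. -/
theorem statement5 (d m : ℕ) (hd : 0 < d) (hm : 0 < m)
    (β10 β20 : Fin d → ℝ)
    (M1 M2 : Matrix (Fin m) (Fin d) ℝ) (W1 W2 : Matrix (Fin m) (Fin m) ℝ)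
    (l11 l22 l10 l20 : ℝ)
    (h1 : l11 + l20 - l22 ≠ 0) (h2 : l22 + l10 - l11 ≠ 0) :
    let β1γ : Fin d → ℝ := (l11 + l20 - l22)⁻¹ • (l11 • β10 + (l20 - l22) • β20)
    let β2γ : Fin d → ℝ := (l22 + l10 - l11)⁻¹ • (l22 • β20 + (l10 - l11) • β10)
    let m1 : Fin m → ℝ := l11 • M1.mulVec (β10 - β1γ) + (l20 - l22) • M2.mulVec (β20 - β1γ)
    let m2 : Fin m → ℝ := (l10 - l11) • M1.mulVec (β10 - β2γ) + l22 • M2.mulVec (β20 - β2γ)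
    (m1 = (l11 * (l20 - l22) / (l11 + l20 - l22)) • (M2 - M1).mulVec (β20 - β10))
    ∧ (m2 = (l22 * (l10 - l11) / (l22 + l10 - l11)) • (M2 - M1).mulVec (β20 - β10))
    ∧ (m1 ⬝ᵥ W1.mulVec m1 + m2 ⬝ᵥ W2.mulVec m2
        = (l11 * (l20 - l22) / (l11 + l20 - l22)) ^ 2
            * (((M2 - M1).mulVec (β20 - β10)) ⬝ᵥ W1.mulVec ((M2 - M1).mulVec (β20 - β10)))
          + (l22 * (l10 - l11) / (l22 + l10 - l11)) ^ 2
            * (((M2 - M1).mulVec (β20 - β10)) ⬝ᵥ W2.mulVec ((M2 - M1).mulVec (β20 - β10))))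
    ∧ ((M2 - M1).mulVec (β20 - β10) = 0
        → m1 ⬝ᵥ W1.mulVec m1 + m2 ⬝ᵥ W2.mulVec m2 = 0) := by
  have hw : l22 + l10 - l11 = (l10 - l11) + l22 := by ring
  simpa only [pseudoTrueValue, limitMoment, LinearMap.sub_apply, Matrix.mulVecLin_apply,
    Matrix.sub_mulVec, toQuadraticForm'_eq_dotProduct_mulVec, smul_eq_mul, hw, add_sub_assoc,
    mul_comm l22, add_comm (l22 • β20)] using
    statement5_general (add_sub_assoc l11 l20 l22 ▸ h1) (hw ▸ h2) W1.toQuadraticForm'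
      W2.toQuadraticForm' M1.mulVecLin M2.mulVecLin β10 β20
end

section
/- Fix positive integers N, T, p, G. For each i ∈ {1,…,N} and t ∈ {1,…,T}, let x_{it} ∈ ℝ^p. Let γ⁰ = (g_1⁰,…,g_N⁰) and γ = (g_1,…,g_N) be elements of {1,…,G}^N, let β⁰, β ∈ (ℝ^p)^G, and let α⁰, α ∈ (ℝ^T)^G (write α_{g,t} for the t-th component of α_g). Define 𝐱_{it} ∈ ℝ^{p+T} as the concatenation of x_{it} with √T · e_t (e_t the t-th standard basis vector of ℝ^T); for each (g, g̃) define the (p+T)×(p+T) symmetric positive semidefinite matrix M(γ, g, g̃) ≔ (1/N) Σ_{i=1}^N 1{g_i⁰ = g} 1{g_i = g̃} (1/T) Σ_{t=1}^T 𝐱_{it} 𝐱_{it}ᵀ, and the vector v(g, g̃) ∈ ℝ^{p+T} as the concatenation of β_g⁰ − β_{g̃} with T^{-1/2}(α_g⁰ − α_{g̃}). Then (1/(NT)) Σ_{i=1}^N Σ_{t=1}^T (x_{it}ᵀ(β⁰_{g_i⁰} − β_{g_i}) + (α⁰_{g_i⁰,t} − α_{g_i,t}))² = Σ_{g=1}^G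 Σ_{g̃=1}^G v(g, g̃)ᵀ M(γ, g, g̃) v(g, g̃), and this quantity is at least Σ_{g=1}^G Σ_{g̃=1}^G ρ(γ, g, g̃) (‖β_g⁰ − β_{g̃}‖² + (1/T) Σ_{t=1}^T (α⁰_{g,t} − α_{g̃,t})²), where ρ(γ, g, g̃) is the smallest eigenvalue of M(γ, g, g̃). -/
open Finset Matrix

/-!
The scalings `√T` and `1 / √T` cancel in the pairing of the augmented regressor of unit `i` in
period `t` with `v(g⁰ᵢ, gᵢ)`, so this pairing is the summand whose square is averaged. Collecting
the squares by the pair `(g⁰ᵢ, gᵢ)` gives the quadratic forms. The lower bound holds term by term,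
since `M - ρ • 1` is positive semidefinite for a symmetric `M` with smallest eigenvalue `ρ`.
-/

section RayleighBound

variable {𝕜 n : Type*} [RCLike 𝕜] [Fintype n] [DecidableEq n] {A : Matrix n n 𝕜}

open scoped ComplexOrder MatrixOrder in
theorem posSemidef_sub_algebraMap_sInf_spectrum (hA : A.IsHermitian) :
    (A - algebraMap ℝ (Matrix n n 𝕜) (sInf (spectrum ℝ A))).PosSemidef :=
  Matrix.le_iff.1 <| algebraMap_le_of_le_spectrum
    (fun _ hμ => csInf_le A.finite_real_spectrum.bddBelow hμ) hA

open scoped ComplexOrder in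
theorem sInf_spectrum_smul_star_dotProduct_self_le (hA : A.IsHermitian) (v : n → 𝕜) :
    sInf (spectrum ℝ A) • (star v ⬝ᵥ v) ≤ star v ⬝ᵥ A *ᵥ v := by
  have h := (posSemidef_sub_algebraMap_sInf_spectrum hA).dotProduct_mulVec_nonneg v
  rwa [sub_mulVec, Algebra.algebraMap_eq_smul_one, smul_mulVec, one_mulVec, dotProduct_sub,
    dotProduct_smul, sub_nonneg] at h

end RayleighBound

section GroupMoment

variable {ι τ κ n R : Type*} [Fintype ι] [Fintype τ] [DecidableEq κ]

/-- The weighted second-moment matrix of the regressors `X i t` over the units `i` with label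
`ℓ i = k`. The matrix `M(γ, g, g̃)` is the case `ℓ i = (g⁰ᵢ, gᵢ)`, `k = (g, g̃)`, with constant
weights `(NT)⁻¹`; general weights also cover unbalanced panels. -/
def groupMoment [CommSemiring R] (w : ι → τ → R) (X : ι → τ → n → R) (ℓ : ι → κ) (k : κ) :
    Matrix n n R :=
  ∑ i with ℓ i = k, ∑ t, w i t • vecMulVec (X i t) (X i t)

theorem isSymm_groupMoment [CommSemiring R] (w : ι → τ → R) (X : ι → τ → n → R) (ℓ : ι → κ)
    (k : κ) : (groupMoment w X ℓ k).IsSymm := by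
  simp only [IsSymm, groupMoment, transpose_sum, transpose_smul, transpose_vecMulVec]

variable [Fintype n]

theorem dotProduct_groupMoment_mulVec [CommSemiring R] (w : ι → τ → R) (X : ι → τ → n → R)
    (ℓ : ι → κ) (k : κ) (v : n → R) :
    v ⬝ᵥ groupMoment w X ℓ k *ᵥ v = ∑ i with ℓ i = k, ∑ t, w i t * (X i t ⬝ᵥ v) ^ 2 := by
  simp only [groupMoment, sum_mulVec, smul_mulVec, vecMulVec_mulVec, op_smul_eq_smul,
    dotProduct_comm v, sum_dotProduct, smul_dotProduct, smul_eq_mul, sq]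

theorem sum_sq_dotProduct_eq_sum_groupMoment [CommSemiring R] [Fintype κ] (w : ι → τ → R)
    (X : ι → τ → n → R) (ℓ : ι → κ) (v : κ → n → R) :
    ∑ i, ∑ t, w i t * (X i t ⬝ᵥ v (ℓ i)) ^ 2 = ∑ k, v k ⬝ᵥ groupMoment w X ℓ k *ᵥ v k := by
  simp only [dotProduct_groupMoment_mulVec]
  rw [← sum_fiberwise univ ℓ]
  refine sum_congr rfl fun k _ => sum_congr rfl fun i hi => ?_
  rw [(mem_filter.1 hi).2]

theorem sInf_spectrum_groupMoment_mul_dotProduct_self_le [DecidableEq n] (w : ι → τ → ℝ)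
    (X : ι → τ → n → ℝ) (ℓ : ι → κ) (k : κ) (v : n → ℝ) :
    sInf (spectrum ℝ (groupMoment w X ℓ k)) * (v ⬝ᵥ v) ≤ v ⬝ᵥ groupMoment w X ℓ k *ᵥ v :=
  sInf_spectrum_smul_star_dotProduct_self_le
    (isHermitian_iff_isSymm.2 (isSymm_groupMoment w X ℓ k)) v

end GroupMoment

section TimeAugmentation

variable {τ n K : Type*} [Semifield K]

/-- The regressor `x` of period `t`, extended by the time dummy `c • e_t`. The paper takes
`c = √T`. -/
def timeAugment [DecidableEq τ] (c : K) (x : n → K) (t : τ) : n ⊕ τ → K :=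
  Sum.elim x (fun s => c * if s = t then 1 else 0)

/-- The stacked coefficient vector `(b, c⁻¹ • a)` paired with the regressors `timeAugment c x t`:
`b` multiplies the covariates and `a t` is the effect of period `t`. -/
def timeStack (c : K) (b : n → K) (a : τ → K) : n ⊕ τ → K :=
  Sum.elim b (fun t => c⁻¹ * a t)

variable [Fintype τ] [Fintype n]

theorem timeAugment_dotProduct_timeStack [DecidableEq τ] {c : K} (hc : c ≠ 0) (x b : n → K)
    (a : τ → K) (t : τ) : timeAugment c x t ⬝ᵥ timeStack c b a = x ⬝ᵥ b + a t := by
  rw [timeAugment, timeStack, sumElim_dotProduct_sumElim]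
  simp [dotProduct, hc]

theorem timeStack_dotProduct_self (c : K) (b : n → K) (a : τ → K) :
    timeStack c b a ⬝ᵥ timeStack c b a = (∑ j, b j ^ 2) + (c ^ 2)⁻¹ * ∑ t, a t ^ 2 := by
  rw [timeStack, sumElim_dotProduct_sumElim, mul_sum]
  simp only [dotProduct, ← sq, mul_pow, inv_pow]

end TimeAugmentation

theorem statement11_general {ι τ n κ : Type*} [Fintype ι] [Fintype τ] [DecidableEq τ] [Fintype n]
    [DecidableEq n] [Fintype κ] [DecidableEq κ] (w : ι → τ → ℝ) (x : ι → τ → n → ℝ) (ℓ : ι → κ)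
    (b : κ → n → ℝ) (a : κ → τ → ℝ) {c : ℝ} (hc : c ≠ 0) :
    let M := groupMoment w (fun i t => timeAugment c (x i t) t) ℓ
    let v := fun k => timeStack c (b k) (a k)
    (∑ i, ∑ t, w i t * (x i t ⬝ᵥ b (ℓ i) + a (ℓ i) t) ^ 2 = ∑ k, v k ⬝ᵥ M k *ᵥ v k) ∧
      ∑ i, ∑ t, w i t * (x i t ⬝ᵥ b (ℓ i) + a (ℓ i) t) ^ 2 ≥
        ∑ k, sInf (spectrum ℝ (M k)) * ((∑ j, b k j ^ 2) + (c ^ 2)⁻¹ * ∑ t, a k t ^ 2) := by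
  intro M v
  have decomposition :
      ∑ i, ∑ t, w i t * (x i t ⬝ᵥ b (ℓ i) + a (ℓ i) t) ^ 2 = ∑ k, v k ⬝ᵥ M k *ᵥ v k := by
    simpa only [v, timeAugment_dotProduct_timeStack hc] using
      sum_sq_dotProduct_eq_sum_groupMoment w (fun i t => timeAugment c (x i t) t) ℓ v
  refine ⟨decomposition, decomposition ▸ sum_le_sum fun k _ => ?_⟩
  rw [← timeStack_dotProduct_self]
  exact sInf_spectrum_groupMoment_mul_dotProduct_self_le _ _ _ _ _

/-- **Quadratic-form decomposition and eigenvalue lower bound (proof of Lemma A1(b)).** The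
within-sample discrepancy between true and candidate grouped parameters equals a sum of
quadratic forms in the time-augmented second-moment matrices `M(γ, g, g̃)`, and is bounded
below by the sum of the smallest eigenvalues `ρ(γ, g, g̃) = sInf (spectrum ℝ (M γ g g̃))`
times the squared parameter distances. -/
theorem statement11
    (N T p G : ℕ) (hN : 0 < N) (hT : 0 < T) (hp : 0 < p) (hG : 0 < G)
    (x : Fin N → Fin T → Fin p → ℝ)
    (γ0 γ : Fin N → Fin G)
    (β0 β : Fin G → Fin p → ℝ)
    (α0 α : Fin G → Fin T → ℝ) :
    let X : Fin N → Fin T → (Fin p ⊕ Fin T) → ℝ :=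
      fun i t => Sum.elim (x i t) (fun s => Real.sqrt T * (if s = t then 1 else 0))
    let M : Fin G → Fin G → Matrix (Fin p ⊕ Fin T) (Fin p ⊕ Fin T) ℝ :=
      fun g g' => (N : ℝ)⁻¹ •
        ∑ i ∈ univ.filter (fun i => γ0 i = g ∧ γ i = g'),
          (T : ℝ)⁻¹ • ∑ t, vecMulVec (X i t) (X i t)
    let v : Fin G → Fin G → (Fin p ⊕ Fin T) → ℝ :=
      fun g g' => Sum.elim (β0 g - β g')
        (fun t => (Real.sqrt T)⁻¹ * (α0 g t - α g' t))
    ((↑(N * T) : ℝ)⁻¹ *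
        ∑ i, ∑ t,
          (x i t ⬝ᵥ (β0 (γ0 i) - β (γ i)) + (α0 (γ0 i) t - α (γ i) t)) ^ 2
      = ∑ g, ∑ g', v g g' ⬝ᵥ (M g g').mulVec (v g g'))
    ∧ ((↑(N * T) : ℝ)⁻¹ *
        ∑ i, ∑ t,
          (x i t ⬝ᵥ (β0 (γ0 i) - β (γ i)) + (α0 (γ0 i) t - α (γ i) t)) ^ 2
      ≥ ∑ g, ∑ g',
          sInf (spectrum ℝ (M g g')) *
            ((∑ j, (β0 g j - β g' j) ^ 2) + (T : ℝ)⁻¹ * ∑ t, (α0 g t - α g' t) ^ 2)) := by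
  have hc : √(T : ℝ) ≠ 0 := by positivity
  simpa [groupMoment, timeAugment, timeStack, Fintype.sum_prod_type, ← mul_sum, ← smul_sum,
    smul_smul, mul_comm] using statement11_general (fun _ _ => (↑(N * T) : ℝ)⁻¹) x
      (fun i => (γ0 i, γ i)) (fun k => β0 k.1 - β k.2) (fun k => α0 k.1 - α k.2) hc
end

section
/- Fix positive integers N, T, q, d, K and a real number C ≥ 0. For each i ∈ {1,…,N} and t ∈ {1,…,T}, let w_{it} ∈ ℝ^q, let c_i ∈ {0, 1}, let k_i⁰ ∈ {1,…,K}, and for each k ∈ {1,…,K} and t let μ_{k,t} ∈ ℝ^d with ‖μ_{k,t}‖ ≤ C. Then, with ‖·‖ denoting the Frobenius norm of d×q matrices, ‖(1/(NT)) Σ_{i=1}^N c_i Σ_{t=1}^T μ_{k_i⁰, t} w_{it}ᵀ‖ ≤ C · Σ_{k=1}^K ((1/N²) Σ_{i=1}^N Σ_{j=1}^N |(1/T) Σ_{t=1}^T ⟨w_{it}, w_{jt}⟩|)^{1/2}. -/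
open Finset Matrix

attribute [local instance] Matrix.frobeniusNormedAddCommGroup

/-! For each group `k`, write `∑ₜ μ_{k,t} w_{it}ᵀ = Mᵀ Wᵢ`, where the rows of `M` and `Wᵢ` are the
vectors `μ_{k,t}` and `w_{it}`. The Frobenius norm is submultiplicative, so the contribution of the
group is at most `‖M‖ ‖∑ᵢ cᵢ Wᵢ‖`. Here `‖M‖² = ∑ₜ ‖μ_{k,t}‖² ≤ T C²`, and expanding the trace form
gives `‖∑ᵢ cᵢ Wᵢ‖² ≤ ∑ᵢⱼ |tr (Wᵢ Wⱼᵀ)| = ∑ᵢⱼ |∑ₜ ⟨w_{it}, w_{jt}⟩|`. -/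

attribute [local instance] Matrix.frobeniusNormedSpace

section FrobeniusNorm

variable {𝕜 ι l m n : Type*} [RCLike 𝕜] [Fintype l] [Fintype m] [Fintype n]

theorem frobenius_norm_sq_eq_re_trace (A : Matrix m n 𝕜) :
    ‖A‖ ^ 2 = RCLike.re (A * Aᴴ).trace := by
  have hsum : 0 ≤ ∑ i, ∑ j, ‖A i j‖ ^ 2 := by positivity
  simp only [frobenius_norm_def, Real.rpow_two, ← Real.sqrt_eq_rpow, Real.sq_sqrt hsum,
    trace, diag_apply, mul_apply, conjTranspose_apply, RCLike.star_def, RCLike.mul_conj,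
    map_sum, ← RCLike.ofReal_pow, RCLike.ofReal_re]

theorem frobenius_norm_sq_sum_smul_le (s : Finset ι) {a : ι → 𝕜} (ha : ∀ i ∈ s, ‖a i‖ ≤ 1)
    (X : ι → Matrix m n 𝕜) :
    ‖∑ i ∈ s, a i • X i‖ ^ 2 ≤ ∑ i ∈ s, ∑ j ∈ s, ‖(X i * (X j)ᴴ).trace‖ := by
  have expand : ((∑ i ∈ s, a i • X i) * (∑ i ∈ s, a i • X i)ᴴ).trace =
      ∑ i ∈ s, ∑ j ∈ s, star (a j) * (a i * (X i * (X j)ᴴ).trace) := by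
    rw [conjTranspose_sum, Matrix.sum_mul]
    simp only [conjTranspose_smul, Matrix.mul_sum, Matrix.smul_mul, Matrix.mul_smul, trace_sum,
      trace_smul, smul_eq_mul]
  rw [frobenius_norm_sq_eq_re_trace, expand]
  refine (RCLike.re_le_norm _).trans (norm_sum_le_of_le s fun i hi ↦
    norm_sum_le_of_le s fun j hj ↦ ?_)
  rw [← mul_assoc, norm_mul, norm_mul, norm_star]
  exact mul_le_of_le_one_left (norm_nonneg _)
    (mul_le_one₀ (ha j hj) (norm_nonneg _) (ha i hi))

theorem frobenius_norm_sum_smul_mul_le (s : Finset ι) {a : ι → 𝕜} (ha : ∀ i ∈ s, ‖a i‖ ≤ 1)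
    (B : Matrix l m 𝕜) (X : ι → Matrix m n 𝕜) :
    ‖∑ i ∈ s, a i • (B * X i)‖ ≤ ‖B‖ * √(∑ i ∈ s, ∑ j ∈ s, ‖(X i * (X j)ᴴ).trace‖) := by
  have factor : ∑ i ∈ s, a i • (B * X i) = B * ∑ i ∈ s, a i • X i := by
    simp only [Matrix.mul_sum, Matrix.mul_smul]
  rw [factor]
  exact (frobenius_norm_mul _ _).trans <| mul_le_mul_of_nonneg_left
    (Real.le_sqrt_of_sq_le (frobenius_norm_sq_sum_smul_le s ha X)) (norm_nonneg B)

end FrobeniusNorm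

theorem sum_vecMulVec_eq_transpose_mul {R m n τ : Type*} [Fintype τ] [NonUnitalNonAssocSemiring R]
    (u : τ → m → R) (v : τ → n → R) :
    ∑ t, vecMulVec (u t) (v t) = (of u)ᵀ * of v := by
  ext x y
  simp only [Matrix.sum_apply, vecMulVec_apply, mul_apply, transpose_apply, of_apply]

theorem trace_of_mul_conjTranspose_of {R n τ : Type*} [Fintype n] [Fintype τ]
    [NonUnitalNonAssocSemiring R] [Star R] (u v : τ → n → R) :
    (of u * (of v)ᴴ).trace = ∑ t, u t ⬝ᵥ star (v t) := rfl

theorem sum_sum_le_univ_sum_sum {ι κ M : Type*} [Fintype ι] [Fintype κ] [AddCommMonoid M]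
    [PartialOrder M] [IsOrderedAddMonoid M] {f : ι → κ → M} (s : Finset ι) (t : Finset κ)
    (hf : ∀ i j, 0 ≤ f i j) : ∑ i ∈ s, ∑ j ∈ t, f i j ≤ ∑ i, ∑ j, f i j :=
  (sum_le_sum fun i _ ↦ sum_le_univ_sum_of_nonneg (hf i)).trans <|
    sum_le_univ_sum_of_nonneg fun i ↦ sum_nonneg fun j _ ↦ hf i j

theorem sqrt_average_le {τ : Type*} [Fintype τ] [Nonempty τ] {f : τ → ℝ} {C : ℝ}
    (hf : ∀ t, √(f t) ≤ C) : √((Fintype.card τ : ℝ)⁻¹ * ∑ t, f t) ≤ C := by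
  have hC : 0 ≤ C := (Real.sqrt_nonneg _).trans (hf (Classical.arbitrary τ))
  have hcard : (0 : ℝ) < Fintype.card τ := by exact_mod_cast Fintype.card_pos
  have hsum : ∑ t, f t ≤ Fintype.card τ * C ^ 2 := by
    simpa using sum_le_card_nsmul univ f (C ^ 2) fun t _ ↦ (Real.sqrt_le_left hC).mp (hf t)
  rwa [Real.sqrt_le_left hC, inv_mul_le_iff₀ hcard]

section CrossMoment

variable {ι κ τ m n : Type*} [Fintype τ] [Fintype m] [Fintype n]

theorem norm_sum_smul_sum_vecMulVec_le (s : Finset ι) {a : ι → ℝ} (ha : ∀ i ∈ s, |a i| ≤ 1)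
    (u : τ → m → ℝ) (w : ι → τ → n → ℝ) :
    ‖∑ i ∈ s, a i • ∑ t, vecMulVec (u t) (w i t)‖ ≤
      √(∑ t, u t ⬝ᵥ u t) * √(∑ i ∈ s, ∑ j ∈ s, |∑ t, w i t ⬝ᵥ w j t|) := by
  have norm_u : ‖(of u)ᵀ‖ = √(∑ t, u t ⬝ᵥ u t) := by
    rw [frobenius_norm_transpose, ← Real.sqrt_sq (norm_nonneg (of u)),
      frobenius_norm_sq_eq_re_trace]
    simp only [trace_of_mul_conjTranspose_of, star_trivial, RCLike.re_to_real]
  simp only [sum_vecMulVec_eq_transpose_mul, ← norm_u]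
  simpa only [trace_of_mul_conjTranspose_of, star_trivial, Real.norm_eq_abs] using
    frobenius_norm_sum_smul_mul_le s ha (of u)ᵀ fun i ↦ of (w i)

theorem norm_sum_smul_average_vecMulVec_le (s : Finset ι) {a : ι → ℝ} (ha : ∀ i ∈ s, |a i| ≤ 1)
    (u : τ → m → ℝ) (w : ι → τ → n → ℝ) :
    ‖(Fintype.card τ : ℝ)⁻¹ • ∑ i ∈ s, a i • ∑ t, vecMulVec (u t) (w i t)‖ ≤
      √((Fintype.card τ : ℝ)⁻¹ * ∑ t, u t ⬝ᵥ u t) *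
        √(∑ i ∈ s, ∑ j ∈ s, |(Fintype.card τ : ℝ)⁻¹ * ∑ t, w i t ⬝ᵥ w j t|) := by
  have hT : 0 ≤ (Fintype.card τ : ℝ)⁻¹ := by positivity
  simp only [norm_smul, Real.norm_of_nonneg hT, abs_mul, abs_of_nonneg hT, ← Finset.mul_sum,
    Real.sqrt_mul hT]
  rw [mul_mul_mul_comm, Real.mul_self_sqrt hT]
  exact mul_le_mul_of_nonneg_left (norm_sum_smul_sum_vecMulVec_le s ha u w) hT

theorem statement14_general [Fintype ι] [Fintype κ] [DecidableEq κ] [Nonempty ι] [Nonempty τ]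
    {C : ℝ} (w : ι → τ → n → ℝ) {c : ι → ℝ} (hc : ∀ i, |c i| ≤ 1) (k0 : ι → κ)
    (μ : κ → τ → m → ℝ)
    (hμ : ∀ k, √((Fintype.card τ : ℝ)⁻¹ * ∑ t, μ k t ⬝ᵥ μ k t) ≤ C) :
    ‖((Fintype.card ι : ℝ) * Fintype.card τ)⁻¹ •
        ∑ i, c i • ∑ t, vecMulVec (μ (k0 i) t) (w i t)‖ ≤
      C * ∑ k, √(((Fintype.card ι : ℝ) ^ 2)⁻¹ * ∑ i with k0 i = k, ∑ j with k0 j = k,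
        |(Fintype.card τ : ℝ)⁻¹ * ∑ t, w i t ⬝ᵥ w j t|) := by
  have hN : 0 ≤ (Fintype.card ι : ℝ)⁻¹ := by positivity
  have split_groups : ∑ i, c i • ∑ t, vecMulVec (μ (k0 i) t) (w i t) =
      ∑ k, ∑ i with k0 i = k, c i • ∑ t, vecMulVec (μ k t) (w i t) := by
    rw [← sum_fiberwise univ k0]
    refine sum_congr rfl fun k _ ↦ sum_congr rfl fun i hi ↦ ?_
    rw [(mem_filter.mp hi).2]
  rw [split_groups, mul_inv, mul_smul, norm_smul, Real.norm_of_nonneg hN, Finset.smul_sum]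
  simp only [← inv_pow, Real.sqrt_mul (sq_nonneg _), Real.sqrt_sq hN, ← Finset.mul_sum]
  rw [mul_left_comm, Finset.mul_sum]
  refine mul_le_mul_of_nonneg_left (norm_sum_le_of_le _ fun k _ ↦ ?_) hN
  exact (norm_sum_smul_average_vecMulVec_le _ (fun i _ ↦ hc i) (μ k) w).trans <|
    mul_le_mul_of_nonneg_right (hμ k) (Real.sqrt_nonneg _)

end CrossMoment

/-- **Fixed-effect cross-moment bound (supplement to Lemma A2).** For indicator weights
`cᵢ ∈ {0,1}`, first-stage groups `k⁰ᵢ`, and uniformly bounded group fixed effects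
`‖μ_{k,t}‖ ≤ C`, the Frobenius norm of the averaged cross moment is controlled by the
pairwise absolute time-averaged inner products of the error array, summed over groups. -/
theorem statement14
    (N T q d K : ℕ) (hN : 0 < N) (hT : 0 < T) (hq : 0 < q) (hd : 0 < d) (hK : 0 < K)
    (C : ℝ) (hC : 0 ≤ C)
    (w : Fin N → Fin T → Fin q → ℝ)
    (c : Fin N → ℝ) (hc : ∀ i, c i = 0 ∨ c i = 1)
    (k0 : Fin N → Fin K)
    (μ : Fin K → Fin T → Fin d → ℝ)
    (hμ : ∀ k t, Real.sqrt (μ k t ⬝ᵥ μ k t) ≤ C) :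
    ‖(↑(N * T) : ℝ)⁻¹ • ∑ i, c i • ∑ t, vecMulVec (μ (k0 i) t) (w i t)‖
      ≤ C * ∑ _k : Fin K,
          Real.sqrt (((N : ℝ) ^ 2)⁻¹ * ∑ i, ∑ j, |(T : ℝ)⁻¹ * ∑ t, w i t ⬝ᵥ w j t|) := by
  have : Nonempty (Fin N) := ⟨⟨0, hN⟩⟩
  have : Nonempty (Fin T) := ⟨⟨0, hT⟩⟩
  have hc_abs (i) : |c i| ≤ 1 := by rcases hc i with h | h <;> simp [h]
  have within_groups := statement14_general w hc_abs k0 μ fun k ↦ sqrt_average_le (hμ k)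
  simp only [Fintype.card_fin, ← Nat.cast_mul] at within_groups
  refine within_groups.trans ?_
  gcongr
  exact sum_sum_le_univ_sum_sum _ _ fun _ _ ↦ abs_nonneg _
end
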